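/- arXiv:1304.0513 — 4 statements merged into one kernel-verified Lean document; each statement's English description precedes it below -/
import Mathlib

section
/- There is a constant C > 0 such that for every n ≥ 1 and every n×n 0–1 matrix A there exists an OR-circuit of size at most C·n² computing Ī⊗A; that is, there exists a finite directed acyclic graph (edge relation with irreflexive transitive closure) with at most C·n² edges, with vertices inp(x,y) and out(i,j) for (i,j),(x,y) ∈ [n]×[n], out(i,j) never equal to any inp(x,y), such that for all i,j,x,y there is a directed path from inp(x,y) to out(i,j) if and only if A(i,x) = 1 and j ≠ y. -/
open Matrix

/-!
Encode `j` and `y` by binary words of length `g ≈ log₂ n`. Then `j ≠ y` iff, for some position `k`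
and bit `b`, the word of `y` has `b` at `k` and that of `j` does not. Hence `Ī ⊗ A` is a product of
three Boolean matrices: `n` copies of the matrix "`y` has bit `b` at `k`", then `2g` copies of `A`,
then `n` copies of a transposed and relabelled version of the first one. The first matrix has
circuits of size `O(2 ^ g) = O(n)`, obtained by peeling off one bit at a time. Lupanov's method
computes `A` with `O(n ^ 2 / g)` edges: cut the `n` columns into blocks of size `g`, compute all
`2 ^ g` disjunctions inside each block (again by a transposed bit circuit), and let every row
select one disjunction per block. Each of the three factors therefore costs `O(n ^ 2)`.
-/

open Relation

theorem ncard_le_card_of_subset_range {α ι : Type*} [Fintype ι] {s : Set α} {f : ι → α}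
    (h : s ⊆ Set.range f) : s.ncard ≤ Fintype.card ι :=
  calc s.ncard ≤ (Set.range f).ncard := Set.ncard_le_ncard h (Set.finite_range f)
    _ ≤ Nat.card ι := Finite.card_range_le f
    _ = Fintype.card ι := Nat.card_eq_fintype_card

section LinkedSum

variable {α β : Type*} {E : α → α → Prop} {F : β → β → Prop} {L : α → β → Prop}

/-- The disjoint union of the digraphs `E` and `F`, together with the edges `L` leading from the
first to the second. All gluings of circuits below are of this form. -/
inductive LinkedSum (E : α → α → Prop) (F : β → β → Prop) (L : α → β → Prop) :
    α ⊕ β → α ⊕ β → Prop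
  | left {a a' : α} (h : E a a') : LinkedSum E F L (.inl a) (.inl a')
  | right {b b' : β} (h : F b b') : LinkedSum E F L (.inr b) (.inr b')
  | link {a : α} {b : β} (h : L a b) : LinkedSum E F L (.inl a) (.inr b)

namespace LinkedSum

theorem reflTransGen_inl_left {a a' : α} (h : ReflTransGen E a a') :
    ReflTransGen (LinkedSum E F L) (.inl a) (.inl a') :=
  h.lift Sum.inl fun _ _ => .left

theorem reflTransGen_inr_right {b b' : β} (h : ReflTransGen F b b') :
    ReflTransGen (LinkedSum E F L) (.inr b) (.inr b') :=
  h.lift Sum.inr fun _ _ => .right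

theorem elim_of_reflTransGen_inl {a : α} {v : α ⊕ β}
    (h : ReflTransGen (LinkedSum E F L) (.inl a) v) :
    v.elim (ReflTransGen E a)
      (fun b => ∃ a' b', ReflTransGen E a a' ∧ L a' b' ∧ ReflTransGen F b' b) := by
  induction h with
  | refl => exact .refl
  | tail _ hstep ih =>
    cases hstep with
    | left h => exact ReflTransGen.tail ih h
    | right h =>
      obtain ⟨a', b', ha, hlink, hb⟩ := ih
      exact ⟨a', b', ha, hlink, hb.tail h⟩
    | link h => exact ⟨_, _, ih, h, .refl⟩

theorem elim_of_reflTransGen_inr {b : β} {v : α ⊕ β}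
    (h : ReflTransGen (LinkedSum E F L) (.inr b) v) :
    v.elim (fun _ => False) (ReflTransGen F b) := by
  induction h with
  | refl => exact .refl
  | tail _ hstep ih =>
    cases hstep with
    | left => exact ih
    | right h => exact ReflTransGen.tail ih h
    | link => exact ih.elim

@[simp]
theorem reflTransGen_inl_inl {a a' : α} :
    ReflTransGen (LinkedSum E F L) (.inl a) (.inl a') ↔ ReflTransGen E a a' :=
  ⟨elim_of_reflTransGen_inl, reflTransGen_inl_left⟩

@[simp]
theorem reflTransGen_inr_inr {b b' : β} :
    ReflTransGen (LinkedSum E F L) (.inr b) (.inr b') ↔ ReflTransGen F b b' :=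
  ⟨elim_of_reflTransGen_inr, reflTransGen_inr_right⟩

@[simp]
theorem not_reflTransGen_inr_inl {a : α} {b : β} :
    ¬ ReflTransGen (LinkedSum E F L) (.inr b) (.inl a) :=
  elim_of_reflTransGen_inr

@[simp]
theorem reflTransGen_inl_inr {a : α} {b : β} :
    ReflTransGen (LinkedSum E F L) (.inl a) (.inr b) ↔
      ∃ a' b', ReflTransGen E a a' ∧ L a' b' ∧ ReflTransGen F b' b := by
  refine ⟨elim_of_reflTransGen_inl, ?_⟩
  rintro ⟨a', b', ha, hlink, hb⟩
  exact (reflTransGen_inl_left ha).trans (.head (.link hlink) (reflTransGen_inr_right hb))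

theorem acyclic (hE : ∀ a, ¬ TransGen E a a) (hF : ∀ b, ¬ TransGen F b b) (v : α ⊕ β) :
    ¬ TransGen (LinkedSum E F L) v v := by
  rw [TransGen.head'_iff]
  rintro ⟨w, hvw, hwv⟩
  cases hvw with
  | left h => exact hE _ (.head' h (reflTransGen_inl_inl.1 hwv))
  | right h => exact hF _ (.head' h (reflTransGen_inr_inr.1 hwv))
  | link => exact not_reflTransGen_inr_inl hwv

theorem ncard_le [Finite α] [Finite β] :
    {p : (α ⊕ β) × (α ⊕ β) | LinkedSum E F L p.1 p.2}.ncard ≤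
      {p : α × α | E p.1 p.2}.ncard + {p : β × β | F p.1 p.2}.ncard +
        {p : α × β | L p.1 p.2}.ncard := by
  have hsub : {p : (α ⊕ β) × (α ⊕ β) | LinkedSum E F L p.1 p.2} ⊆
      Prod.map .inl .inl '' {p : α × α | E p.1 p.2} ∪
        Prod.map .inr .inr '' {p : β × β | F p.1 p.2} ∪
          Prod.map .inl .inr '' {p : α × β | L p.1 p.2} := by
    rintro ⟨_, _⟩ (h | h | h)
    · exact .inl (.inl ⟨(_, _), h, rfl⟩)
    · exact .inl (.inr ⟨(_, _), h, rfl⟩)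
    · exact .inr ⟨(_, _), h, rfl⟩
  calc _ ≤ _ := Set.ncard_le_ncard hsub (Set.toFinite _)
    _ ≤ _ := Set.ncard_union_le _ _
    _ ≤ _ := Nat.add_le_add_right (Set.ncard_union_le _ _) _
    _ ≤ _ := add_le_add_three (Set.ncard_image_le (Set.toFinite _))
      (Set.ncard_image_le (Set.toFinite _)) (Set.ncard_image_le (Set.toFinite _))

end LinkedSum

end LinkedSum

/-- An OR-circuit with inputs indexed by `X` and outputs indexed by `Y`: a finite acyclic digraph,
in which every vertex computes the disjunction of the inputs from which it is reachable. -/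
structure ORCircuit (X Y : Type) where
  V : Type
  [fintype : Fintype V]
  Edge : V → V → Prop
  inp : X → V
  out : Y → V
  acyclic : ∀ v, ¬ TransGen Edge v v
  out_ne_inp : ∀ y x, out y ≠ inp x

namespace ORCircuit

attribute [instance] ORCircuit.fintype

variable {X Y Z X' Y' : Type}

/-- The relation computed by a circuit, that is, its 0–1 matrix with columns `x` and rows `y`. -/
def rel (C : ORCircuit X Y) (x : X) (y : Y) : Prop :=
  ReflTransGen C.Edge (C.inp x) (C.out y)

/-- The size of a circuit, its number of edges. -/
noncomputable def size (C : ORCircuit X Y) : ℕ :=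
  {p : C.V × C.V | C.Edge p.1 p.2}.ncard

/-- Relabelling of inputs and outputs. The maps need not be injective, so this also restricts and
repeats inputs and outputs, at no cost in size. -/
def comap (C : ORCircuit X Y) (f : X' → X) (h : Y' → Y) : ORCircuit X' Y' where
  V := C.V
  Edge := C.Edge
  inp := C.inp ∘ f
  out := C.out ∘ h
  acyclic := C.acyclic
  out_ne_inp _ _ := C.out_ne_inp _ _

@[simp]
theorem rel_comap (C : ORCircuit X Y) (f : X' → X) (h : Y' → Y) (x : X') (y : Y') :
    (C.comap f h).rel x y ↔ C.rel (f x) (h y) :=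
  Iff.rfl

@[simp]
theorem size_comap (C : ORCircuit X Y) (f : X' → X) (h : Y' → Y) :
    (C.comap f h).size = C.size :=
  rfl

/-- The circuit with all edges reversed, which computes the transposed matrix. -/
def reverse (C : ORCircuit X Y) : ORCircuit Y X where
  V := C.V
  Edge := Function.swap C.Edge
  inp := C.out
  out := C.inp
  acyclic v := by rw [transGen_swap]; exact C.acyclic v
  out_ne_inp x y := (C.out_ne_inp y x).symm

@[simp]
theorem rel_reverse (C : ORCircuit X Y) (y : Y) (x : X) : C.reverse.rel y x ↔ C.rel x y :=
  reflTransGen_swap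

@[simp]
theorem size_reverse (C : ORCircuit X Y) : C.reverse.size = C.size :=
  Set.ncard_preimage_of_injective_subset_range (s := {p : C.V × C.V | C.Edge p.1 p.2})
    Prod.swap_injective (by simp [Prod.swap_surjective.range_eq])

/-- The depth-one circuit of a relation. -/
def bipartite [Fintype X] [Fintype Y] (R : X → Y → Prop) : ORCircuit X Y where
  V := X ⊕ Y
  Edge := LinkedSum (fun _ _ => False) (fun _ _ => False) R
  inp := .inl
  out := .inr
  acyclic := LinkedSum.acyclic (fun _ h => by simpa using TransGen.head'_iff.1 h)
    (fun _ h => by simpa using TransGen.head'_iff.1 h)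
  out_ne_inp _ _ := Sum.inr_ne_inl

@[simp]
theorem rel_bipartite [Fintype X] [Fintype Y] (R : X → Y → Prop) (x : X) (y : Y) :
    (bipartite R).rel x y ↔ R x y := by
  have reflTransGen_false {α : Type} {a b : α} :
      ReflTransGen (fun _ _ : α => False) a b ↔ b = a :=
    reflTransGen_iff_eq fun _ => id
  simp [rel, bipartite, reflTransGen_false]

theorem size_bipartite_le_card {ι : Type*} [Fintype X] [Fintype Y] [Fintype ι] {R : X → Y → Prop}
    {f : ι → X × Y} (h : ∀ x y, R x y → (x, y) ∈ Set.range f) :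
    (bipartite R).size ≤ Fintype.card ι :=
  calc (bipartite R).size ≤ {p : X × Y | R p.1 p.2}.ncard :=
        LinkedSum.ncard_le.trans (by simp)
    _ ≤ Fintype.card ι := ncard_le_card_of_subset_range fun p => h p.1 p.2

/-- Two circuits side by side. -/
def sum (C : ORCircuit X Y) (D : ORCircuit X' Y') : ORCircuit (X ⊕ X') (Y ⊕ Y') where
  V := C.V ⊕ D.V
  Edge := LinkedSum C.Edge D.Edge fun _ _ => False
  inp := Sum.map C.inp D.inp
  out := Sum.map C.out D.out
  acyclic := LinkedSum.acyclic C.acyclic D.acyclic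
  out_ne_inp := by
    rintro (y | y) (x | x)
    · simpa using C.out_ne_inp y x
    · exact Sum.inl_ne_inr
    · exact Sum.inr_ne_inl
    · simpa using D.out_ne_inp y x

@[simp]
theorem rel_sum (C : ORCircuit X Y) (D : ORCircuit X' Y') (x : X ⊕ X') (y : Y ⊕ Y') :
    (C.sum D).rel x y ↔ Sum.LiftRel C.rel D.rel x y := by
  rcases x with x | x <;> rcases y with y | y <;> simp [rel, sum]

theorem size_sum_le (C : ORCircuit X Y) (D : ORCircuit X' Y') :
    (C.sum D).size ≤ C.size + D.size :=
  LinkedSum.ncard_le.trans (by simp [size])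

/-- Serial composition: each output of `C` is linked by a new edge to the input of `D` with the
same label. -/
def comp (C : ORCircuit X Y) (D : ORCircuit Y Z) : ORCircuit X Z where
  V := C.V ⊕ D.V
  Edge := LinkedSum C.Edge D.Edge fun v w => ∃ y, C.out y = v ∧ D.inp y = w
  inp := .inl ∘ C.inp
  out := .inr ∘ D.out
  acyclic := LinkedSum.acyclic C.acyclic D.acyclic
  out_ne_inp _ _ := Sum.inr_ne_inl

@[simp]
theorem rel_comp (C : ORCircuit X Y) (D : ORCircuit Y Z) (x : X) (z : Z) :
    (C.comp D).rel x z ↔ ∃ y, C.rel x y ∧ D.rel y z := by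
  simp only [rel, comp, Function.comp_apply, LinkedSum.reflTransGen_inl_inr]
  constructor
  · rintro ⟨_, _, hC, ⟨y, rfl, rfl⟩, hD⟩
    exact ⟨y, hC, hD⟩
  · rintro ⟨y, hC, hD⟩
    exact ⟨_, _, hC, ⟨y, rfl, rfl⟩, hD⟩

theorem size_comp_le [Fintype Y] (C : ORCircuit X Y) (D : ORCircuit Y Z) :
    (C.comp D).size ≤ C.size + D.size + Fintype.card Y := by
  refine LinkedSum.ncard_le.trans (Nat.add_le_add_left ?_ _)
  refine ncard_le_card_of_subset_range (f := fun y => (C.out y, D.inp y)) ?_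
  rintro ⟨_, _⟩ ⟨y, rfl, rfl⟩
  exact ⟨y, rfl⟩

/-- Disjoint copies of a circuit, indexed by `ι`. They compute the tensor product of the matrix
with the identity matrix. -/
def copies (ι : Type) [Fintype ι] (C : ORCircuit X Y) : ORCircuit (ι × X) (ι × Y) where
  V := ι × C.V
  Edge v w := v.1 = w.1 ∧ C.Edge v.2 w.2
  inp := Prod.map id C.inp
  out := Prod.map id C.out
  acyclic v h := C.acyclic v.2 (h.lift Prod.snd fun _ _ => And.right)
  out_ne_inp q p h := C.out_ne_inp q.2 p.2 (congrArg Prod.snd h)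

@[simp]
theorem rel_copies (ι : Type) [Fintype ι] (C : ORCircuit X Y) (p : ι × X) (q : ι × Y) :
    (C.copies ι).rel p q ↔ p.1 = q.1 ∧ C.rel p.2 q.2 := by
  obtain ⟨i, x⟩ := p
  obtain ⟨j, y⟩ := q
  constructor
  · intro h
    have hindex : ReflTransGen Eq i j := h.lift Prod.fst fun _ _ => And.left
    exact ⟨by rwa [reflTransGen_eq_self] at hindex, h.lift Prod.snd fun _ _ => And.right⟩
  · rintro ⟨rfl, h⟩
    exact h.lift (Prod.mk i) fun _ _ hedge => ⟨rfl, hedge⟩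

theorem size_copies_le (ι : Type) [Fintype ι] (C : ORCircuit X Y) :
    (C.copies ι).size ≤ Fintype.card ι * C.size := by
  have hedges : {p : (ι × C.V) × (ι × C.V) | p.1.1 = p.2.1 ∧ C.Edge p.1.2 p.2.2} ⊆
      (fun q : ι × C.V × C.V => ((q.1, q.2.1), (q.1, q.2.2))) ''
        (Set.univ ×ˢ {p : C.V × C.V | C.Edge p.1 p.2}) := by
    rintro ⟨⟨i, v⟩, ⟨_, w⟩⟩ ⟨⟨⟩, h⟩
    exact ⟨(i, v, w), ⟨trivial, h⟩, rfl⟩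
  calc (C.copies ι).size
      ≤ (Set.univ ×ˢ {p : C.V × C.V | C.Edge p.1 p.2} : Set (ι × C.V × C.V)).ncard :=
        (Set.ncard_le_ncard hedges (Set.toFinite _)).trans (Set.ncard_image_le (Set.toFinite _))
    _ = Fintype.card ι * C.size := by
        rw [Set.ncard_prod, Set.ncard_univ, Nat.card_eq_fintype_card, size]

/-- The depth-one circuit splitting a binary word into its first letter and its tail. -/
def uncons (g : ℕ) : ORCircuit (Fin (g + 1) → Bool) (Bool ⊕ (Fin g → Bool)) :=
  bipartite fun w => Sum.elim (w 0 = ·) (Fin.tail w = ·)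

theorem size_uncons_le (g : ℕ) : (uncons g).size ≤ 4 * 2 ^ g := by
  have hsize : (uncons g).size ≤ Fintype.card ((Fin (g + 1) → Bool) ⊕ (Fin (g + 1) → Bool)) := by
    refine size_bipartite_le_card
      (f := Sum.elim (fun w => (w, .inl (w 0))) fun w => (w, .inr (Fin.tail w))) ?_
    rintro w (_ | _) rfl
    exacts [⟨.inl w, rfl⟩, ⟨.inr w, rfl⟩]
  simp only [Fintype.card_sum, Fintype.card_pi_const, Fintype.card_bool] at hsize
  omega

/-- The circuit with an input for each binary word `w` of length `g`, which feeds the outputs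
`(k, w k)`. Recursively, the first letter is read off and the tail is passed on. -/
def letters : (g : ℕ) → ORCircuit (Fin g → Bool) (Fin g × Bool)
  | 0 => bipartite fun _ _ => False
  | g + 1 => ((uncons g).comp ((bipartite Eq).sum (letters g))).comap id
      fun p => Fin.cases (.inl p.2) (fun k => .inr (k, p.2)) p.1

@[simp]
theorem rel_letters {g : ℕ} (w : Fin g → Bool) (p : Fin g × Bool) :
    (letters g).rel w p ↔ w p.1 = p.2 := by
  obtain ⟨k, b⟩ := p
  induction g with
  | zero => exact k.elim0
  | succ g ih => cases k using Fin.cases <;> simp [letters, uncons, ih, Fin.tail]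

theorem size_letters_le (g : ℕ) : (letters g).size ≤ 9 * 2 ^ g := by
  induction g with
  | zero =>
    have hsize : (letters 0).size ≤ Fintype.card Empty :=
      size_bipartite_le_card (f := Empty.elim) fun _ _ => False.elim
    exact hsize.trans (Nat.zero_le _)
  | succ g ih =>
    have hEq : (bipartite (@Eq Bool)).size ≤ Fintype.card Bool :=
      size_bipartite_le_card (f := fun b => (b, b)) fun _ _ h => h ▸ ⟨_, rfl⟩
    have hpos : 0 < 2 ^ g := by positivity
    calc (letters (g + 1)).size
        ≤ (uncons g).size + ((bipartite (@Eq Bool)).sum (letters g)).size +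
            Fintype.card (Bool ⊕ (Fin g → Bool)) := size_comp_le _ _
      _ ≤ 4 * 2 ^ g + (2 + 9 * 2 ^ g) + (2 + 2 ^ g) := by
        refine Nat.add_le_add (Nat.add_le_add (size_uncons_le g) ?_) (by simp)
        exact (size_sum_le _ _).trans (Nat.add_le_add hEq ih)
      _ ≤ 9 * 2 ^ (g + 1) := by omega

/-- The circuit with an output for each binary word `w` of length `g`, which is reached from the
inputs `(k, b)` with `b ≠ w k`. -/
def missingLetters (g : ℕ) : ORCircuit (Fin g × Bool) (Fin g → Bool) :=
  (letters g).reverse.comap (fun p => (p.1, !p.2)) id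

@[simp]
theorem rel_missingLetters {g : ℕ} (p : Fin g × Bool) (w : Fin g → Bool) :
    (missingLetters g).rel p w ↔ w p.1 ≠ p.2 := by
  simp [missingLetters, Bool.eq_not]

theorem size_missingLetters_le (g : ℕ) : (missingLetters g).size ≤ 9 * 2 ^ g := by
  simpa only [missingLetters, size_comap, size_reverse] using size_letters_le g

section Lupanov

variable {B : Type} {g : ℕ}

/-- The circuit computing all `2 ^ g` disjunctions of `g` variables; the output `w` is the
disjunction of the inputs `k` with `w k = true`. -/
def disjunctions (g : ℕ) : ORCircuit (Fin g) (Fin g → Bool) :=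
  (letters g).reverse.comap (·, true) id

@[simp]
theorem rel_disjunctions (k : Fin g) (w : Fin g → Bool) :
    (disjunctions g).rel k w ↔ w k = true := by
  simp [disjunctions]

theorem size_disjunctions_le (g : ℕ) : (disjunctions g).size ≤ 9 * 2 ^ g := by
  simpa only [disjunctions, size_comap, size_reverse] using size_letters_le g

open Classical in
/-- The restriction of the row `y` of `R` to the block `q`, where `e` arranges the columns into
blocks of size `g`, indexed by `B`. Positions that hold no column are filled with `false`. -/
noncomputable def blockRow (R : X → Y → Prop) (e : X ↪ B × Fin g) (y : Y) (q : B) : Fin g → Bool :=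
  fun k => decide (∃ x, e x = (q, k) ∧ R x y)

theorem blockRow_apply (R : X → Y → Prop) (e : X ↪ B × Fin g) (x : X) (y : Y) :
    blockRow R e y (e x).1 (e x).2 = true ↔ R x y := by
  simp [blockRow]

variable [Fintype B] [Fintype Y]

/-- Lupanov's circuit for an arbitrary relation: all disjunctions inside each block of columns are
computed, and every row selects one of them per block. -/
noncomputable def lupanov (R : X → Y → Prop) (e : X ↪ B × Fin g) : ORCircuit X Y :=
  (((disjunctions g).copies B).comp
    (bipartite fun p y => p.2 = blockRow R e y p.1)).comap e id

@[simp]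
theorem rel_lupanov (R : X → Y → Prop) (e : X ↪ B × Fin g) (x : X) (y : Y) :
    (lupanov R e).rel x y ↔ R x y := by
  rw [← blockRow_apply R e]
  simp [lupanov]

theorem size_lupanov_le (R : X → Y → Prop) (e : X ↪ B × Fin g) :
    (lupanov R e).size ≤ Fintype.card B * (10 * 2 ^ g + Fintype.card Y) := by
  let select : B × (Fin g → Bool) → Y → Prop := fun p y => p.2 = blockRow R e y p.1
  have hselect : (bipartite select).size ≤ Fintype.card (B × Y) := by
    refine size_bipartite_le_card (f := fun p => ((p.1, blockRow R e p.2 p.1), p.2)) ?_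
    rintro ⟨q, w⟩ y (rfl : w = blockRow R e y q)
    exact ⟨(q, y), rfl⟩
  have hcopies : ((disjunctions g).copies B).size ≤ Fintype.card B * (9 * 2 ^ g) :=
    (size_copies_le B _).trans (Nat.mul_le_mul_left _ (size_disjunctions_le g))
  calc (lupanov R e).size
      ≤ ((disjunctions g).copies B).size + (bipartite select).size +
          Fintype.card (B × (Fin g → Bool)) := size_comp_le _ _
    _ ≤ Fintype.card B * (9 * 2 ^ g) + Fintype.card (B × Y) +
          Fintype.card (B × (Fin g → Bool)) :=
        Nat.add_le_add_right (Nat.add_le_add hcopies hselect) _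
    _ = Fintype.card B * (10 * 2 ^ g + Fintype.card Y) := by
        simp only [Fintype.card_prod, Fintype.card_pi_const, Fintype.card_bool]
        ring

end Lupanov

section CoidentityTensor

variable {J : Type} {g : ℕ} [Fintype X] [Fintype Y]

/-- Given a circuit for a matrix `A` and binary words labelling `J`, the circuit for `Ī ⊗ A`,
where `Ī` is the complement of the identity on `J`. -/
def coidentityTensor (C : ORCircuit X Y) (word : J ↪ (Fin g → Bool)) : ORCircuit (X × J) (Y × J) :=
  ((((letters g).comap word id).copies X).comp
    ((C.copies (Fin g × Bool)).comap Prod.swap Prod.swap)).comp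
      (((missingLetters g).comap id word).copies Y)

@[simp]
theorem rel_coidentityTensor (C : ORCircuit X Y) (word : J ↪ (Fin g → Bool)) (p : X × J)
    (q : Y × J) : (C.coidentityTensor word).rel p q ↔ C.rel p.1 q.1 ∧ q.2 ≠ p.2 := by
  obtain ⟨x, j⟩ := p
  obtain ⟨y, j'⟩ := q
  have hne : j' ≠ j ↔ ∃ k b, word j k = b ∧ word j' k ≠ b := by
    rw [← word.injective.ne_iff, Function.ne_iff]
    simp only [exists_eq_left']
  rw [hne]
  simp only [coidentityTensor, rel_comp, rel_copies, rel_comap, rel_letters,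
    rel_missingLetters, Prod.exists]
  constructor
  · rintro ⟨_, k, b, ⟨_, _, _, ⟨rfl, hj⟩, ⟨⟩, hC⟩, rfl, hj'⟩
    exact ⟨hC, k, b, hj, hj'⟩
  · rintro ⟨hC, k, b, hj, hj'⟩
    exact ⟨y, k, b, ⟨x, k, b, ⟨rfl, hj⟩, rfl, hC⟩, rfl, hj'⟩

theorem size_coidentityTensor_le (C : ORCircuit X Y) (word : J ↪ (Fin g → Bool)) :
    (C.coidentityTensor word).size ≤
      (Fintype.card X + Fintype.card Y) * (9 * 2 ^ g + 2 * g) + 2 * g * C.size := by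
  let first := ((letters g).comap word id).copies X
  let middle : ORCircuit (X × (Fin g × Bool)) (Y × (Fin g × Bool)) :=
    (C.copies (Fin g × Bool)).comap Prod.swap Prod.swap
  let last := ((missingLetters g).comap id word).copies Y
  have hfirst : first.size ≤ Fintype.card X * (9 * 2 ^ g) :=
    (size_copies_le X _).trans (Nat.mul_le_mul_left _ (size_letters_le g))
  have hmiddle : middle.size ≤ Fintype.card (Fin g × Bool) * C.size := size_copies_le _ C
  have hlast : last.size ≤ Fintype.card Y * (9 * 2 ^ g) :=
    (size_copies_le Y _).trans (Nat.mul_le_mul_left _ (size_missingLetters_le g))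
  have hcomp := size_comp_le first middle
  simp only [Fintype.card_prod, Fintype.card_fin, Fintype.card_bool] at hmiddle hcomp
  calc (C.coidentityTensor word).size
      ≤ (first.comp middle).size + last.size + Fintype.card (Y × (Fin g × Bool)) :=
        size_comp_le _ _
    _ ≤ (Fintype.card X * (9 * 2 ^ g) + g * 2 * C.size + Fintype.card X * (g * 2)) +
          Fintype.card Y * (9 * 2 ^ g) + Fintype.card Y * (g * 2) := by
        simp only [Fintype.card_prod, Fintype.card_fin, Fintype.card_bool]
        omega
    _ = _ := by ring

end CoidentityTensor

end ORCircuit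

theorem exists_wordLength_blockCount {n : ℕ} (hn : 1 ≤ n) :
    ∃ g m : ℕ, n ≤ 2 ^ g ∧ 2 ^ g ≤ 2 * n ∧ n ≤ m * g ∧ m * g ≤ 2 * n := by
  have hn0 : n ≠ 0 := Nat.one_le_iff_ne_zero.1 hn
  set g := Nat.log 2 n + 1 with hg
  have hgn : g ≤ n := Nat.log_lt_self 2 hn0
  have hpow : 2 ^ g ≤ 2 * n := by
    rw [hg, pow_succ']
    exact Nat.mul_le_mul_left 2 (Nat.pow_log_le_self 2 hn0)
  refine ⟨g, n / g + 1, (Nat.lt_pow_succ_log_self one_lt_two n).le, hpow, ?_, ?_⟩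
  · exact (Nat.lt_div_mul_add (Nat.succ_pos _)).le.trans_eq (Nat.succ_mul _ _).symm
  · calc (n / g + 1) * g = n / g * g + g := Nat.succ_mul _ _
      _ ≤ n + n := Nat.add_le_add (Nat.div_mul_le_self n g) hgn
      _ = 2 * n := (two_mul n).symm

theorem or_circuit_coidentity_tensor_upper_bound_general :
    ∃ c : ℕ, 0 < c ∧ ∀ n : ℕ, 1 ≤ n → ∀ (X Y J : Type) [Fintype X] [Fintype Y] [Fintype J],
      Fintype.card X ≤ n → Fintype.card Y ≤ n → Fintype.card J ≤ n → ∀ R : X → Y → Prop,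
      ∃ C : ORCircuit (X × J) (Y × J),
        (∀ p q, C.rel p q ↔ R p.1 q.1 ∧ q.2 ≠ p.2) ∧ C.size ≤ c * n ^ 2 := by
  refine ⟨128, by norm_num, fun n hn X Y J _ _ _ hX hY hJ R => ?_⟩
  obtain ⟨g, m, hng, hgn, hnm, hmn⟩ := exists_wordLength_blockCount hn
  obtain ⟨word⟩ : Nonempty (J ↪ (Fin g → Bool)) :=
    Function.Embedding.nonempty_of_card_le (by simpa using hJ.trans hng)
  obtain ⟨block⟩ : Nonempty (X ↪ Fin m × Fin g) :=
    Function.Embedding.nonempty_of_card_le (by simpa using hX.trans hnm)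
  refine ⟨(ORCircuit.lupanov R block).coidentityTensor word, by simp, ?_⟩
  have hlupanov : (ORCircuit.lupanov R block).size ≤ m * (21 * n) :=
    calc (ORCircuit.lupanov R block).size ≤ m * (10 * 2 ^ g + Fintype.card Y) := by
          simpa using ORCircuit.size_lupanov_le R block
      _ ≤ m * (21 * n) := Nat.mul_le_mul_left m (by omega)
  have hg : g ≤ 2 ^ g := Nat.lt_two_pow_self.le
  calc ((ORCircuit.lupanov R block).coidentityTensor word).size
      ≤ (Fintype.card X + Fintype.card Y) * (9 * 2 ^ g + 2 * g) +
          2 * g * (ORCircuit.lupanov R block).size := ORCircuit.size_coidentityTensor_le _ word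
    _ ≤ (n + n) * (9 * (2 * n) + 2 * (2 * n)) + 2 * g * (m * (21 * n)) := by
        gcongr
        exact hg.trans hgn
    _ = 44 * n ^ 2 + 42 * (m * g) * n := by ring
    _ ≤ 44 * n ^ 2 + 42 * (2 * n) * n := by gcongr
    _ = 128 * n ^ 2 := by ring

/-- there is a constant `C > 0` such that for every `n ≥ 1` and every
`n × n` 0–1 matrix `A` there is an OR-circuit with at most `C * n ^ 2` edges
computing `Ī ⊗ A`: a finite DAG with inputs `inp (x, y)`, outputs `out (i, j)`,
such that `out (i, j)` is reachable from `inp (x, y)` iff `A i x = 1 ∧ j ≠ y`. -/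
theorem or_circuit_coidentity_tensor_upper_bound :
    ∃ C : ℕ, 0 < C ∧ ∀ n : ℕ, 1 ≤ n → ∀ A : Matrix (Fin n) (Fin n) ℕ,
      (∀ i j, A i j = 0 ∨ A i j = 1) →
      ∃ (V : Type) (_ : Fintype V) (E : V → V → Prop)
        (inp out : Fin n × Fin n → V),
        (∀ v, ¬ Relation.TransGen E v v) ∧
        (∀ p q, out p ≠ inp q) ∧
        {p : V × V | E p.1 p.2}.ncard ≤ C * n ^ 2 ∧
        (∀ i j x y : Fin n,
          Relation.ReflTransGen E (inp (x, y)) (out (i, j)) ↔ A i x = 1 ∧ j ≠ y) := by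
  obtain ⟨c, hc, h⟩ := or_circuit_coidentity_tensor_upper_bound_general
  refine ⟨c, hc, fun n hn A _ => ?_⟩
  obtain ⟨C, hrel, hsize⟩ := h n hn (Fin n) (Fin n) (Fin n) (by simp) (by simp) (by simp)
    fun x i => A i x = 1
  exact ⟨C.V, C.fintype, C.Edge, C.inp, C.out, C.acyclic, C.out_ne_inp, hsize,
    fun i j x y => hrel (x, y) (i, j)⟩
end

section
/- Let n ≥ 1 and suppose P and Q are n×r matrices with nonnegative integer entries such that for all i, j ∈ [n]: (P·Qᵀ)(i,j) ≠ 0 if and only if i ≠ j. Then n ≤ 2^r. (In other words, the boolean rank of the complement of the identity matrix is at least log₂ n.) -/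
open Matrix

/-! Over a semiring in which sums and products of nonzero elements are nonzero, the support of a row
of `A * B` is the union of the supports of those rows of `B` selected by the support of the
corresponding row of `A`. So if `r` is the inner dimension, the rows of a product have at most
`2 ^ r` different supports, whereas all rows of the complement of the identity have different
supports. -/

section RowSupport

variable {m n κ R : Type*} [Fintype κ] [NonUnitalNonAssocSemiring R] [Subsingleton (AddUnits R)]
  [NoZeroDivisors R]

theorem matrix_mul_apply_ne_zero_iff {A : Matrix m κ R} {B : Matrix κ n R} {i : m} {j : n} :
    (A * B) i j ≠ 0 ↔ ∃ k, A i k ≠ 0 ∧ B k j ≠ 0 := by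
  simp [Matrix.mul_apply]

theorem support_row_mul (A : Matrix m κ R) (B : Matrix κ n R) (i : m) :
    Function.support ((A * B) i) = ⋃ k ∈ Function.support (A i), Function.support (B k) := by
  ext j
  simp only [Function.mem_support, matrix_mul_apply_ne_zero_iff, Set.mem_iUnion, exists_prop]

theorem enatCard_le_two_pow_of_injective_support_row_mul {A : Matrix m κ R} {B : Matrix κ n R}
    (hAB : Function.Injective fun i ↦ Function.support ((A * B) i)) :
    ENat.card m ≤ 2 ^ Fintype.card κ := by
  have hA : Function.Injective fun i ↦ Function.support (A i) := by
    simp only [support_row_mul] at hAB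
    exact hAB.of_comp (f := fun S : Set κ ↦ ⋃ k ∈ S, Function.support (B k))
  simpa using ENat.card_le_card_of_injective hA

end RowSupport

theorem injective_support_row_of_ne_zero_iff_ne {m R : Type*} [Zero R] {A : Matrix m m R}
    (hA : ∀ i j, A i j ≠ 0 ↔ i ≠ j) : Function.Injective fun i ↦ Function.support (A i) := by
  have support_row (i : m) : Function.support (A i) = {i}ᶜ := by
    ext j
    simp [hA, eq_comm]
  simp only [support_row]
  exact compl_injective.comp Set.singleton_injective

theorem or_rank_coidentity_lower_bound_general {m κ R : Type*} [Fintype κ]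
    [NonUnitalNonAssocSemiring R] [Subsingleton (AddUnits R)] [NoZeroDivisors R]
    (P Q : Matrix m κ R) (h : ∀ i j, (P * Qᵀ) i j ≠ 0 ↔ i ≠ j) :
    ENat.card m ≤ 2 ^ Fintype.card κ :=
  enatCard_le_two_pow_of_injective_support_row_mul (injective_support_row_of_ne_zero_iff_ne h)

/-- the boolean rank of the complement of the identity matrix is at
least `log₂ n`: if `P, Q` are `n × r` nonnegative-integer matrices with
`(P * Qᵀ) i j ≠ 0` iff `i ≠ j`, then `n ≤ 2 ^ r`. -/
theorem or_rank_coidentity_lower_bound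
    {n r : ℕ} (hn : 1 ≤ n)
    (P Q : Matrix (Fin n) (Fin r) ℕ)
    (h : ∀ i j : Fin n, (P * Qᵀ) i j ≠ 0 ↔ i ≠ j) :
    n ≤ 2 ^ r := by
  have card_le : (n : ℕ∞) ≤ 2 ^ r := by simpa using or_rank_coidentity_lower_bound_general P Q h
  exact_mod_cast card_le
end

section
/- Let D be a nonempty finite set of vectors in GF(2)ⁿ and set m = 2·⌈log₂ |D|⌉ + 1. Then there exists an m×n matrix P over GF(2) such that the map x ↦ P·x is injective on D. -/
open Matrix

/-!
For distinct `x` and `y`, evaluation `P ↦ P *ᵥ (x - y)` is a surjective homomorphism from matrices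
to column vectors, so the matrices that identify `x` with `y` form a subgroup whose index is the
number of column vectors. A matrix fails to be injective on `D` exactly when it lies in one of the
`|D| (|D| - 1)` subgroups obtained this way; as this number is smaller than their common index,
they cannot cover the group, by B. H. Neumann's lemma. Over a finite field this is the union
bound for a uniformly random matrix; Neumann's lemma gives the same conclusion over infinite ones.
-/

open scoped Pointwise in
theorem exists_forall_map_ne_zero_of_card_lt {ι A B : Type*} [AddGroup A] [AddGroup B]
    {s : Finset ι} {f : ι → A →+ B} (hf : ∀ i ∈ s, Function.Surjective (f i))
    (hs : (s.card : ℕ∞) < ENat.card B) :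
    ∃ a, ∀ i ∈ s, f i a ≠ 0 := by
  by_contra! hzero
  have hcover : ⋃ i ∈ s, (0 : A) +ᵥ ((f i).ker : Set A) = Set.univ := by
    simpa [Set.eq_univ_iff_forall] using hzero
  obtain ⟨i, hi, hfinite, hindex⟩ := AddSubgroup.exists_index_le_card_of_leftCoset_cover hcover
  have hindex_eq : (f i).ker.index = Nat.card B := by
    rw [AddSubgroup.index_ker, AddMonoidHom.range_eq_top.mpr (hf i hi), AddSubgroup.card_top]
  have : Finite B := Nat.finite_of_card_ne_zero (hindex_eq ▸ hfinite.index_ne_zero)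
  have hlt : s.card < Nat.card B := by
    rwa [ENat.card_eq_coe_natCard, Nat.cast_lt] at hs
  exact hlt.not_ge (hindex_eq ▸ hindex)

theorem mulVec_left_surjective {m n K : Type*} [Fintype n] [DivisionRing K] {z : n → K}
    (hz : z ≠ 0) : Function.Surjective fun P : Matrix m n K => P *ᵥ z := by
  classical
  obtain ⟨j, hj⟩ := Function.ne_iff.mp hz
  refine fun w => ⟨vecMulVec w (Pi.single j (z j)⁻¹), ?_⟩
  simp only [vecMulVec_mulVec, single_dotProduct, inv_mul_cancel₀ hj, MulOpposite.op_one, one_smul]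

theorem mul_sub_one_lt_pow_two_mul_clog {b : ℕ} (hb : 1 < b) (k : ℕ) :
    k * (k - 1) < b ^ (2 * Nat.clog b k) := by
  obtain rfl | hk := k.eq_zero_or_pos
  · simp
  have hle : k ≤ b ^ Nat.clog b k := Nat.le_pow_clog hb k
  calc k * (k - 1) < k * k := Nat.mul_lt_mul_of_pos_left (Nat.sub_one_lt_of_lt hk) hk
    _ ≤ b ^ Nat.clog b k * b ^ Nat.clog b k := Nat.mul_le_mul hle hle
    _ = b ^ (2 * Nat.clog b k) := by rw [← pow_add, two_mul]

theorem exists_injective_compression_general {m n K : Type*} [Fintype n] [DivisionRing K]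
    (D : Finset (n → K)) (hD : ((D.card * (D.card - 1) : ℕ) : ℕ∞) < ENat.card (m → K)) :
    ∃ P : Matrix m n K, Set.InjOn (fun x => P *ᵥ x) ↑D := by
  classical
  rw [Nat.mul_sub_one, ← Finset.offDiag_card] at hD
  obtain ⟨P, hP⟩ := exists_forall_map_ne_zero_of_card_lt
    (f := fun p : (n → K) × (n → K) => mulVec.addMonoidHomLeft (p.1 - p.2))
    (fun p hp => mulVec_left_surjective (sub_ne_zero.mpr (Finset.mem_offDiag.mp hp).2.2)) hD
  refine ⟨P, fun x hx y hy hxy => ?_⟩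
  by_contra hne
  have hdiff : P *ᵥ (x - y) = 0 := by rw [mulVec_sub, sub_eq_zero.mpr hxy]
  exact hP (x, y) (Finset.mem_offDiag.mpr ⟨hx, hy, hne⟩) hdiff

/-- existence content of Miltersen's theorem: for every nonempty
finite set `D` of vectors in `GF(2)ⁿ` there is an `m × n` matrix `P` over
`GF(2)`, with `m = 2 * ⌈log₂ |D|⌉ + 1`, such that `x ↦ P.mulVec x` is injective
on `D`. -/
theorem exists_injective_compression
    {n : ℕ} (D : Finset (Fin n → ZMod 2)) (hD : D.Nonempty) :
    ∃ P : Matrix (Fin (2 * Nat.clog 2 D.card + 1)) (Fin n) (ZMod 2),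
      Set.InjOn (fun x => P.mulVec x) ↑D := by
  refine exists_injective_compression_general D ?_
  simpa only [ENat.card_eq_coe_fintype_card, Nat.cast_lt, Fintype.card_fun, Fintype.card_fin,
    ZMod.card] using
    (mul_sub_one_lt_pow_two_mul_clog one_lt_two D.card).trans (Nat.pow_lt_pow_succ one_lt_two)
end

section
/- Let P be an m×n matrix over GF(2) = ZMod 2 such that for every injective map J : Fin k → Fin n the k columns of P indexed by J are linearly independent (in particular k ≤ m). Then for every pair of injective maps I, J : Fin k → Fin n and every k×k matrix M over GF(2), the number of m×m matrices R over GF(2) such that the k×k submatrix of Pᵀ·R·P with rows I and columns J equals M (i.e., (Pᵀ·R·P)(I a, J b) = M(a,b) for all a,b) is exactly 2^(m²−k²). In particular, if R is uniformly random, the matrix A = Pᵀ·R·P is k-uniform: every k×k submatrix of A is uniformly distributed on GF(2)^(k×k). -/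
open Matrix

/-!
Writing `A` and `B` for the matrices of the columns of `P` selected by `I` and `J`, the selected
submatrix of `Pᵀ * R * P` is `Aᵀ * R * B`. Independence of the columns gives left inverses of `A`
and `B`, so `R ↦ Aᵀ * R * B` is a surjective linear map, and all its fibers are translates of a
kernel of dimension `m ^ 2 - k ^ 2`.
-/

theorem ncard_fiber_eq_pow_finrank_sub {K V W : Type*} [DivisionRing K] [AddCommGroup V]
    [Module K V] [Module.Finite K V] [AddCommGroup W] [Module K W] {f : V →ₗ[K] W}
    (hf : Function.Surjective f) (w : W) :
    {v | f v = w}.ncard = Nat.card K ^ (Module.finrank K V - Module.finrank K W) := by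
  have finrank_ker : Module.finrank K f.ker = Module.finrank K V - Module.finrank K W := by
    rw [← f.finrank_range_add_finrank_ker, LinearMap.range_eq_top.2 hf, finrank_top,
      Nat.add_sub_cancel_left]
  calc {v | f v = w}.ncard
      = Nat.card f.ker := Nat.card_congr (f.toAddMonoidHom.fiberEquivKerOfSurjective hf w)
    _ = Nat.card K ^ Module.finrank K f.ker := Module.natCard_eq_pow_finrank
    _ = _ := by rw [finrank_ker]

section

variable {K m n p q r s : Type*} [Fintype m] [Fintype p]

theorem exists_left_inverse_of_linearIndependent_col [Field K] [DecidableEq r]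
    {A : Matrix m r K} (hA : LinearIndependent K A.col) : ∃ B : Matrix r m K, B * A = 1 := by
  classical
  have : Finite r := hA.finite
  cases nonempty_fintype r
  obtain ⟨g, hg⟩ := A.toLin'.exists_leftInverse_of_injective
    (LinearMap.ker_eq_bot.2 (mulVec_injective_iff.2 hA))
  refine ⟨LinearMap.toMatrix' g, ?_⟩
  rw [← LinearMap.toMatrix'_toLin' A, ← LinearMap.toMatrix'_comp, hg, LinearMap.toMatrix'_id]

theorem transpose_mul_mul_surjective [Field K] {A : Matrix m r K} {B : Matrix p s K}
    (hA : LinearIndependent K A.col) (hB : LinearIndependent K B.col) :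
    Function.Surjective fun X : Matrix m p K => Aᵀ * X * B := by
  classical
  have : Finite r := hA.finite
  have : Finite s := hB.finite
  cases nonempty_fintype r
  cases nonempty_fintype s
  obtain ⟨A', hA'⟩ := exists_left_inverse_of_linearIndependent_col hA
  obtain ⟨B', hB'⟩ := exists_left_inverse_of_linearIndependent_col hB
  intro M
  refine ⟨A'ᵀ * M * B', ?_⟩
  calc Aᵀ * (A'ᵀ * M * B') * B = (A' * A)ᵀ * M * (B' * B) := by
        simp only [transpose_mul, Matrix.mul_assoc]
    _ = M := by rw [hA', hB', transpose_one, Matrix.one_mul, Matrix.mul_one]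

theorem conjugated_submatrix_fiber_count_general [Field K] [Finite K] [Fintype r] [Fintype s]
    (P : Matrix m n K) (Q : Matrix p q K) {I : r → n} {J : s → q}
    (hI : LinearIndependent K fun a i => P i (I a))
    (hJ : LinearIndependent K fun b i => Q i (J b)) (M : Matrix r s K) :
    {R : Matrix m p K | ∀ a b, (Pᵀ * R * Q) (I a) (J b) = M a b}.ncard =
      Nat.card K ^ (Fintype.card m * Fintype.card p - Fintype.card r * Fintype.card s) := by
  let A := P.submatrix id I
  let B := Q.submatrix id J
  let f : Matrix m p K →ₗ[K] Matrix r s K := mulRightLinearMap r K B ∘ₗ mulLeftLinearMap p K Aᵀ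
  have hf : Function.Surjective f := transpose_mul_mul_surjective (A := A) (B := B) hI hJ
  have entry_eq (R : Matrix m p K) (a : r) (b : s) : (Pᵀ * R * Q) (I a) (J b) = f R a b := rfl
  simp only [entry_eq, Matrix.ext_iff]
  rw [ncard_fiber_eq_pow_finrank_sub hf]
  simp only [Module.finrank_matrix, Module.finrank_self, mul_one]

end

/-- if every `k` columns of the `m × n` matrix `P` over `GF(2)` are
linearly independent, then for all injective `I, J : Fin k → Fin n` and every
`k × k` matrix `M` over `GF(2)`, exactly `2^(m² - k²)` of the `m × m` matrices
`R` satisfy `(Pᵀ * R * P) (I a) (J b) = M a b` for all `a, b`; in particular,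
for uniformly random `R` the matrix `Pᵀ * R * P` is `k`-uniform. -/
theorem conjugated_submatrix_fiber_count
    {m n k : ℕ} (P : Matrix (Fin m) (Fin n) (ZMod 2))
    (hcols : ∀ J : Fin k → Fin n, Function.Injective J →
      LinearIndependent (ZMod 2) (fun a : Fin k => fun i : Fin m => P i (J a))) :
    ∀ I J : Fin k → Fin n, Function.Injective I → Function.Injective J →
      ∀ M : Matrix (Fin k) (Fin k) (ZMod 2),
        {R : Matrix (Fin m) (Fin m) (ZMod 2) |
            ∀ a b, (Pᵀ * R * P) (I a) (J b) = M a b}.ncard = 2 ^ (m ^ 2 - k ^ 2) := by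
  intro I J hI hJ M
  simpa [sq] using conjugated_submatrix_fiber_count_general P P (hcols I hI) (hcols J hJ) M
end
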